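/- arXiv:2211.15678 — 2 statements merged into one kernel-verified Lean document; each statement's English description precedes it below -/
import Mathlib

section
/- (Theorem 1, achievability direction: one-shot dilution protocol) Let ρ be a state on H_out, φ a pure state on H_in, and ε ≥ 0. If 1/‖φ‖_μ° ≥ inf{‖X‖_μ : X ∈ B_ε(ρ)}, then there exists a linear map Λ ∈ O_μ such that ‖Λ(φ) − ρ‖₁ ≤ ε. -/
/-!
The map is `Λ(Y) = ⟨φ, Y⟩ • X`, where `X` minimises `‖·‖_μ` on `B_ε(ρ)`.

* `Λ(φ) = X` because `⟨φ, φ⟩ = Tr φ² = 1`, so `‖Λ(φ) - ρ‖₁ ≤ ε`.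
* `‖Λ(Y)‖₁ = |⟨φ, Y⟩| ‖X‖₁ ≤ ‖Y‖₁`, since `‖X‖₁ ≤ 1` and the projection `φ` has operator norm at
  most one (`abs_hip_le_trNorm_of_proj`).
* `‖Λ(Y)‖_μ ≤ |⟨φ, Y⟩| / ‖φ‖_μ° ≤ ‖Y‖_μ` by the definition of the dual norm
  (`abs_hip_le_dualNormF`).

The minimiser exists by compactness (`exists_le_sInf_image`), once the trace norm is known to be a
norm. This rests on the variational formula `‖X‖₁ = max ⟨Q, X⟩` over self-adjoint unitaries `Q`:
the lemmas `hip_le_trNorm` and `exists_hip_eq_trNorm` are its two halves. Topologies are always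
those generated by an explicit norm, so the matrix topology on `HMat` plays no role.
-/

open scoped ComplexOrder
open Filter

noncomputable section

/-- The real vector space of self-adjoint (Hermitian) operators on `ℂ^ι`. -/
abbrev HMat (ι : Type) [Fintype ι] [DecidableEq ι] : Type :=
  selfAdjoint (Matrix ι ι ℂ)

variable {ι κ : Type} [Fintype ι] [DecidableEq ι] [Fintype κ] [DecidableEq κ]

/-- The matrix underlying a self-adjoint operator is Hermitian. -/
def herm (X : HMat ι) : X.1.IsHermitian := X.2

/-- The (real) Hilbert–Schmidt inner product `⟨Q, X⟩ = Tr (Q X)`. -/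
def hip (Q X : HMat ι) : ℝ := (Matrix.trace (Q.1 * X.1)).re

/-- The trace norm of a self-adjoint operator: the sum of absolute values of eigenvalues. -/
def trNorm (X : HMat ι) : ℝ := ∑ i, |(herm X).eigenvalues i|

/-- The operator norm of a self-adjoint operator: the largest absolute value of an eigenvalue. -/
def opNorm (X : HMat ι) : ℝ := ⨆ i, |(herm X).eigenvalues i|

/-- A state: a positive semidefinite operator of unit trace. -/
def IsState (ρ : HMat ι) : Prop := ρ.1.PosSemidef ∧ Matrix.trace ρ.1 = 1

/-- A pure state: a rank-one orthogonal projection. -/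
def IsPureState (φ : HMat ι) : Prop := IsState φ ∧ φ.1 * φ.1 = φ.1

/-- A norm-like function on self-adjoint operators. -/
structure MatNorm (ι : Type) [Fintype ι] [DecidableEq ι] where
  toFun : HMat ι → ℝ
  eq_zero' : ∀ X, toFun X = 0 → X = 0
  smul' : ∀ (t : ℝ) (X), toFun (t • X) = |t| * toFun X
  add_le' : ∀ X Y, toFun (X + Y) ≤ toFun X + toFun Y

/-- A resource norm: a norm with `‖ρ‖ ≥ 1` on every state. -/
structure ResourceNorm (ι : Type) [Fintype ι] [DecidableEq ι] extends MatNorm ι where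
  one_le_state' : ∀ ρ, IsState ρ → 1 ≤ toFun ρ

/-- The dual norm `‖Q‖° = sup {⟨Q, X⟩ : ‖X‖ ≤ 1}`. -/
def dualNormF (ν : HMat ι → ℝ) (Q : HMat ι) : ℝ :=
  sSup {r | ∃ X, ν X ≤ 1 ∧ r = hip Q X}

/-- Membership in the class `O_μ` of maps contracting the trace norm and the resource norms. -/
def MemO (νi : ResourceNorm ι) (νo : ResourceNorm κ) (Λ : HMat ι →ₗ[ℝ] HMat κ) : Prop :=
  (∀ X, trNorm (Λ X) ≤ trNorm X) ∧ (∀ X, νo.toFun (Λ X) ≤ νi.toFun X)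

/-- The trace-norm ε-ball around a state. -/
def ball (ρ : HMat ι) (ε : ℝ) : Set (HMat ι) :=
  {X | trNorm X ≤ 1 ∧ trNorm (X - ρ) ≤ ε}

/-- Loewner order: `A ≤ B` iff `B - A` is positive semidefinite. -/
def loew (A B : Matrix ι ι ℂ) : Prop := (B - A).PosSemidef

/-- The feasible values `⟨Q, Z⟩` entering the emancipated hypothesis testing quantity. -/
def dhSet (ρ Z : HMat ι) (ε : ℝ) : Set ℝ :=
  {r | ∃ Q : HMat ι, loew (-(1 : Matrix ι ι ℂ)) Q.1 ∧ loew Q.1 1 ∧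
        1 - ε ≤ hip Q ρ ∧ r = hip Q Z}

/-- The non-logarithmic emancipated hypothesis testing quantity `d_ħ^ε(ρ‖Z)`,
with value `+∞` when the infimum is `≤ 0`. -/
def dEmanc (ρ Z : HMat ι) (ε : ℝ) : EReal :=
  if 0 < sInf (dhSet ρ Z ε) then (((sInf (dhSet ρ Z ε))⁻¹ : ℝ) : EReal) else ⊤

/-- The emancipated hypothesis testing relative entropy `D_ħ^ε(ρ‖Z)` (base-2 logarithmic form),
with value `+∞` when the infimum is `≤ 0`. -/
def DEmanc (ρ Z : HMat ι) (ε : ℝ) : EReal :=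
  if 0 < sInf (dhSet ρ Z ε) then ((-Real.logb 2 (sInf (dhSet ρ Z ε)) : ℝ) : EReal) else ⊤

/-! ### Norms on finite-dimensional real vector spaces -/

/-- A function satisfying the axioms of a norm on a real vector space, nonnegativity being
automatic. -/
structure IsNormFun {V : Type*} [AddCommGroup V] [Module ℝ V] (p : V → ℝ) : Prop where
  eq_zero : ∀ x, p x = 0 → x = 0
  smul : ∀ (t : ℝ) (x : V), p (t • x) = |t| * p x
  add_le : ∀ x y, p (x + y) ≤ p x + p y

theorem IsNormFun.zero {V : Type*} [AddCommGroup V] [Module ℝ V] {p : V → ℝ}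
    (hp : IsNormFun p) : p 0 = 0 := by
  simpa using hp.smul 0 0

theorem IsNormFun.nonneg {V : Type*} [AddCommGroup V] [Module ℝ V] {p : V → ℝ}
    (hp : IsNormFun p) (x : V) : 0 ≤ p x := by
  have h1 := hp.add_le x ((-1 : ℝ) • x)
  have h2 := hp.smul (-1) x
  have h3 : x + (-1 : ℝ) • x = 0 := by simp
  rw [h3, hp.zero, h2] at h1
  norm_num at h1
  linarith

theorem IsNormFun.core {V : Type*} [AddCommGroup V] [Module ℝ V] {p : V → ℝ}
    (hp : IsNormFun p) : letI : Norm V := ⟨p⟩; NormedSpace.Core ℝ V :=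
  letI : Norm V := ⟨p⟩
  { norm_nonneg := hp.nonneg
    norm_smul := hp.smul
    norm_triangle := hp.add_le
    norm_eq_zero_iff := fun x => ⟨hp.eq_zero x, fun h => h ▸ hp.zero⟩ }

theorem IsNormFun.convexOn {V : Type*} [AddCommGroup V] [Module ℝ V] {p : V → ℝ}
    (hp : IsNormFun p) : ConvexOn ℝ Set.univ p := by
  refine ⟨convex_univ, fun x _ y _ a b ha hb _ => ?_⟩
  have h := hp.add_le (a • x) (b • y)
  rwa [hp.smul, hp.smul, abs_of_nonneg ha, abs_of_nonneg hb] at h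

/-- A norm `p` attains its infimum over a nonempty intersection of two closed balls of a norm
`q`. -/
theorem exists_le_sInf_image {V : Type*} [AddCommGroup V] [Module ℝ V] [FiniteDimensional ℝ V]
    {p q : V → ℝ} (hp : IsNormFun p) (hq : IsNormFun q) (r : V) (ε : ℝ)
    (hne : {x | q x ≤ 1 ∧ q (x - r) ≤ ε}.Nonempty) :
    ∃ x, (q x ≤ 1 ∧ q (x - r) ≤ ε) ∧ p x ≤ sInf (p '' {x | q x ≤ 1 ∧ q (x - r) ≤ ε}) := by
  let : Norm V := ⟨q⟩
  let : NormedAddCommGroup V := NormedAddCommGroup.ofCore hq.core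
  let : NormedSpace ℝ V := NormedSpace.ofCore hq.core
  have : ProperSpace V := FiniteDimensional.proper_real V
  have hS : {x | q x ≤ 1 ∧ q (x - r) ≤ ε} = Metric.closedBall 0 1 ∩ Metric.closedBall r ε := by
    ext x
    rw [Set.mem_inter_iff, mem_closedBall_iff_norm, mem_closedBall_iff_norm, sub_zero]
    rfl
  have hc : IsCompact {x | q x ≤ 1 ∧ q (x - r) ≤ ε} := by
    rw [hS]
    exact (isCompact_closedBall _ _).inter (isCompact_closedBall _ _)
  have hcont : ContinuousOn p Set.univ := ConvexOn.continuousOn isOpen_univ hp.convexOn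
  obtain ⟨x, hx, hmin⟩ := hc.exists_isMinOn hne (hcont.mono (Set.subset_univ _))
  refine ⟨x, hx, le_csInf (hne.image _) ?_⟩
  rintro _ ⟨y, hy, rfl⟩
  exact hmin hy

theorem IsNormFun.exists_bound {V : Type*} [AddCommGroup V] [Module ℝ V]
    [FiniteDimensional ℝ V] {p : V → ℝ} (hp : IsNormFun p) (f : V →ₗ[ℝ] ℝ) :
    ∃ C, 0 ≤ C ∧ ∀ x, |f x| ≤ C * p x := by
  let : Norm V := ⟨p⟩
  let : NormedAddCommGroup V := NormedAddCommGroup.ofCore hp.core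
  let : NormedSpace ℝ V := NormedSpace.ofCore hp.core
  exact ⟨‖LinearMap.toContinuousLinearMap f‖, norm_nonneg _,
    fun x => (LinearMap.toContinuousLinearMap f).le_opNorm x⟩

/-! ### The trace norm -/

theorem MatNorm.isNormFun (ν : MatNorm ι) : IsNormFun ν.toFun :=
  ⟨ν.eq_zero', ν.smul', ν.add_le'⟩

theorem finiteDimensional_hMat (ι : Type) [Fintype ι] [DecidableEq ι] :
    FiniteDimensional ℝ (HMat ι) :=
  inferInstanceAs (FiniteDimensional ℝ (selfAdjoint.submodule ℝ (Matrix ι ι ℂ)))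

/-- The linear functional `⟨Q, ·⟩`. -/
def hipL (Q : HMat ι) : HMat ι →ₗ[ℝ] ℝ where
  toFun := hip Q
  map_add' X Y := by simp [hip, mul_add]
  map_smul' t X := by simp [hip]

theorem hip_add (Q X Y : HMat ι) : hip Q (X + Y) = hip Q X + hip Q Y := (hipL Q).map_add X Y

theorem hip_smul (Q : HMat ι) (t : ℝ) (X : HMat ι) : hip Q (t • X) = t * hip Q X :=
  (hipL Q).map_smul t X

theorem trNorm_nonneg (X : HMat ι) : 0 ≤ trNorm X := Finset.sum_nonneg fun _ _ => abs_nonneg _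

/-- Evaluation of `⟨Q, X⟩` in an eigenbasis of `X`. -/
theorem hip_eq_sum (Q X : HMat ι) :
    hip Q X = ∑ i, ((star ((herm X).eigenvectorUnitary : Matrix ι ι ℂ) * Q.1 *
      ((herm X).eigenvectorUnitary : Matrix ι ι ℂ)) i i).re * (herm X).eigenvalues i := by
  unfold hip
  conv_lhs => rw [(herm X).spectral_theorem, Unitary.conjStarAlgAut_apply]
  rw [← Matrix.mul_assoc, Matrix.trace_mul_comm, ← Matrix.mul_assoc, ← Matrix.mul_assoc,
    Matrix.trace, Complex.re_sum]
  refine Finset.sum_congr rfl fun i _ => ?_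
  simp [Matrix.mul_diagonal]

/-- A self-adjoint unitary has diagonal entries of modulus at most one in every orthonormal basis,
in particular in the eigenbasis of `X`. -/
theorem abs_hip_le_trNorm (Q X : HMat ι) (hQ : Q.1 * Q.1 = 1) : |hip Q X| ≤ trNorm X := by
  have hQs : star Q.1 = Q.1 := Q.2
  have hQu : Q.1 ∈ Matrix.unitaryGroup ι ℂ := by
    rw [Matrix.mem_unitaryGroup_iff, hQs, hQ]
  rw [hip_eq_sum]
  refine (Finset.abs_sum_le_sum_abs _ _).trans (Finset.sum_le_sum fun i _ => ?_)
  rw [abs_mul]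
  refine mul_le_of_le_one_left (abs_nonneg _) ((Complex.abs_re_le_norm _).trans ?_)
  refine entry_norm_bound_of_unitary ?_ i i
  exact mul_mem (mul_mem (star (herm X).eigenvectorUnitary).2 hQu) (herm X).eigenvectorUnitary.2

theorem hip_le_trNorm (Q X : HMat ι) (hQ : Q.1 * Q.1 = 1) : hip Q X ≤ trNorm X :=
  (le_abs_self _).trans (abs_hip_le_trNorm Q X hQ)

/-- The sign of `X`, with the convention that the sign of zero is one, attains the trace norm. -/
theorem exists_hip_eq_trNorm (X : HMat ι) : ∃ Q : HMat ι, Q.1 * Q.1 = 1 ∧ hip Q X = trNorm X := by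
  set U := (herm X).eigenvectorUnitary with hU
  set s : ι → ℝ := fun i => if 0 ≤ (herm X).eigenvalues i then 1 else -1 with hs
  set D : Matrix ι ι ℂ := Matrix.diagonal fun i => (s i : ℂ) with hD
  have hUU : star (U : Matrix ι ι ℂ) * (U : Matrix ι ι ℂ) = 1 := Unitary.coe_star_mul_self U
  have hUU' : (U : Matrix ι ι ℂ) * star (U : Matrix ι ι ℂ) = 1 := Unitary.coe_mul_star_self U
  have hss : ∀ i, s i * s i = 1 := fun i => by
    simp only [hs]; split_ifs <;> norm_num
  have hDD : D * D = 1 := by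
    rw [hD, Matrix.diagonal_mul_diagonal, ← Matrix.diagonal_one]
    congr 1
    funext i
    exact_mod_cast hss i
  have hDs : star D = D := by
    rw [hD, Matrix.star_eq_conjTranspose, Matrix.diagonal_conjTranspose]
    congr 1
    funext i
    simp
  refine ⟨⟨(U : Matrix ι ι ℂ) * D * star (U : Matrix ι ι ℂ), ?_⟩, ?_, ?_⟩
  · rw [selfAdjoint.mem_iff, star_mul, star_mul, star_star, hDs, Matrix.mul_assoc]
  · calc (U : Matrix ι ι ℂ) * D * star (U : Matrix ι ι ℂ) *
          ((U : Matrix ι ι ℂ) * D * star (U : Matrix ι ι ℂ))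
        = (U : Matrix ι ι ℂ) * D * (star (U : Matrix ι ι ℂ) * (U : Matrix ι ι ℂ)) * D *
            star (U : Matrix ι ι ℂ) := by simp only [Matrix.mul_assoc]
      _ = (U : Matrix ι ι ℂ) * (D * D) * star (U : Matrix ι ι ℂ) := by
          rw [hUU]; simp only [Matrix.mul_assoc, Matrix.one_mul]
      _ = 1 := by rw [hDD, Matrix.mul_one, hUU']
  · rw [hip_eq_sum, trNorm]
    refine Finset.sum_congr rfl fun i _ => ?_
    have h1 : star (U : Matrix ι ι ℂ) * ((U : Matrix ι ι ℂ) * D * star (U : Matrix ι ι ℂ)) *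
        (U : Matrix ι ι ℂ) = D := by
      calc _ = (star (U : Matrix ι ι ℂ) * (U : Matrix ι ι ℂ)) * D *
            (star (U : Matrix ι ι ℂ) * (U : Matrix ι ι ℂ)) := by simp only [Matrix.mul_assoc]
        _ = D := by rw [hUU, Matrix.one_mul, Matrix.mul_one]
    rw [← hU, h1, hD, Matrix.diagonal_apply_eq, Complex.ofReal_re]
    simp only [hs]
    split_ifs with h
    · rw [one_mul, abs_of_nonneg h]
    · rw [abs_of_neg (not_le.mp h), neg_one_mul]

theorem trNorm_smul_le (t : ℝ) (X : HMat ι) : trNorm (t • X) ≤ |t| * trNorm X := by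
  obtain ⟨Q, hQ, h⟩ := exists_hip_eq_trNorm (t • X)
  rw [← h, hip_smul]
  refine (le_abs_self _).trans ?_
  rw [abs_mul]
  exact mul_le_mul_of_nonneg_left (abs_hip_le_trNorm Q X hQ) (abs_nonneg _)

theorem isNormFun_trNorm : IsNormFun (trNorm (ι := ι)) where
  eq_zero X h := by
    have h1 := (Finset.sum_eq_zero_iff_of_nonneg (fun i _ => abs_nonneg _)).mp h
    have h2 : (herm X).eigenvalues = 0 := by
      funext i
      exact abs_eq_zero.mp (h1 i (Finset.mem_univ i))
    exact Subtype.ext ((herm X).eigenvalues_eq_zero_iff.mp h2)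
  smul t X := by
    refine le_antisymm (trNorm_smul_le t X) ?_
    rcases eq_or_ne t 0 with rfl | ht
    · simpa using trNorm_nonneg (0 : HMat ι)
    · have h := trNorm_smul_le t⁻¹ (t • X)
      rw [smul_smul, inv_mul_cancel₀ ht, one_smul, abs_inv] at h
      have ht' := abs_pos.mpr ht
      rwa [inv_mul_eq_div, le_div_iff₀ ht', mul_comm] at h
  add_le X Y := by
    obtain ⟨Q, hQ, h⟩ := exists_hip_eq_trNorm (X + Y)
    rw [← h, hip_add]
    exact add_le_add (hip_le_trNorm Q X hQ) (hip_le_trNorm Q Y hQ)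

theorem IsState.trNorm_eq_one {ρ : HMat ι} (hρ : IsState ρ) : trNorm ρ = 1 := by
  have h1 := (herm ρ).trace_eq_sum_eigenvalues
  rw [hρ.2] at h1
  have h2 : ∑ i, (herm ρ).eigenvalues i = 1 := by
    have h3 := congrArg Complex.re h1
    simpa using h3.symm
  rw [← h2]
  exact Finset.sum_congr rfl fun i _ => abs_of_nonneg (hρ.1.eigenvalues_nonneg i)

/-- A projection is the average of the identity and the reflection `2φ - 1`, both of which are
self-adjoint unitaries. -/
theorem abs_hip_le_trNorm_of_proj (φ X : HMat ι) (hφ : φ.1 * φ.1 = φ.1) :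
    |hip φ X| ≤ trNorm X := by
  have h1 := abs_hip_le_trNorm 1 X (by simp)
  have h2 := abs_hip_le_trNorm (φ + φ - 1) X (by
    simp only [AddSubgroupClass.coe_sub, AddMemClass.coe_add, selfAdjoint.val_one]
    noncomm_ring
    rw [hφ]
    abel)
  have h3 : hip (φ + φ - 1) X = hip φ X + hip φ X - hip 1 X := by
    simp [hip, sub_mul, add_mul]
  rw [h3] at h2
  rw [abs_le] at h1 h2 ⊢
  constructor <;> linarith

theorem IsPureState.hip_self {φ : HMat ι} (hφ : IsPureState φ) : hip φ φ = 1 := by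
  rw [hip, hφ.2, hφ.1.2, Complex.one_re]

/-! ### The dual norm -/

theorem hip_le_dualNormF {ν : HMat ι → ℝ} (hν : IsNormFun ν) (Q X : HMat ι) (hX : ν X ≤ 1) :
    hip Q X ≤ dualNormF ν Q := by
  have := finiteDimensional_hMat ι
  obtain ⟨C, hC, h⟩ := hν.exists_bound (hipL Q)
  refine le_csSup ⟨C, ?_⟩ ⟨X, hX, rfl⟩
  rintro _ ⟨Y, hY, rfl⟩
  exact ((le_abs_self _).trans (h Y)).trans (mul_le_of_le_one_right hC hY)

theorem abs_hip_le_dualNormF {ν : HMat ι → ℝ} (hν : IsNormFun ν) (Q X : HMat ι) :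
    |hip Q X| ≤ dualNormF ν Q * ν X := by
  have key : ∀ Y, hip Q Y ≤ dualNormF ν Q * ν Y := by
    intro Y
    rcases (hν.nonneg Y).eq_or_lt' with h0 | hpos
    · rw [hν.eq_zero Y h0, hν.zero, mul_zero]
      exact ((hipL Q).map_zero).le
    · have h := hip_le_dualNormF hν Q ((ν Y)⁻¹ • Y) (by
        rw [hν.smul, abs_inv, abs_of_pos hpos, inv_mul_cancel₀ hpos.ne'])
      rwa [hip_smul, inv_mul_eq_div, div_le_iff₀ hpos] at h
  rw [abs_le']
  refine ⟨key X, ?_⟩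
  have h := key ((-1 : ℝ) • X)
  rw [hip_smul, hν.smul] at h
  simpa using h

/-! ### The measure-and-prepare map -/

/-- **Theorem 1 (achievability direction: one-shot dilution protocol).**
If `1/‖φ‖_μ° ≥ inf {‖X‖_μ : X ∈ B_ε(ρ)}`, then there exists a map `Λ ∈ O_μ`
with `‖Λ(φ) − ρ‖₁ ≤ ε`. -/
theorem oneshot_dilution_achievability
    {dIn dOut : Type} [Fintype dIn] [DecidableEq dIn] [Fintype dOut] [DecidableEq dOut]
    (νi : ResourceNorm dIn) (νo : ResourceNorm dOut)
    (ρ : HMat dOut) (hρ : IsState ρ)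
    (φ : HMat dIn) (hφ : IsPureState φ)
    (ε : ℝ) (hε : 0 ≤ ε)
    (h : sInf (νo.toFun '' ball ρ ε) ≤ (dualNormF νi.toFun φ)⁻¹) :
    ∃ Λ : HMat dIn →ₗ[ℝ] HMat dOut, MemO νi νo Λ ∧ trNorm (Λ φ - ρ) ≤ ε := by
  have hi := νi.toMatNorm.isNormFun
  have ho := νo.toMatNorm.isNormFun
  have := finiteDimensional_hMat dOut
  obtain ⟨X, ⟨hX1, hX2⟩, hX3⟩ := exists_le_sInf_image ho isNormFun_trNorm ρ ε
    ⟨ρ, hρ.trNorm_eq_one.le, by rw [sub_self, isNormFun_trNorm.zero]; exact hε⟩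
  have hXD : νo.toFun X ≤ (dualNormF νi.toFun φ)⁻¹ := hX3.trans h
  -- Positivity of the dual norm follows from `1 = ⟨φ, φ⟩ ≤ ‖φ‖° ‖φ‖`.
  have hD : 0 < dualNormF νi.toFun φ := by
    have h1 := abs_hip_le_dualNormF hi φ φ
    rw [hφ.hip_self, abs_one] at h1
    exact pos_of_mul_pos_left (zero_lt_one.trans_le h1) (hi.nonneg φ)
  refine ⟨(hipL φ).smulRight X, ⟨fun Y => ?_, fun Y => ?_⟩, ?_⟩
  · change trNorm (hip φ Y • X) ≤ trNorm Y
    rw [isNormFun_trNorm.smul]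
    exact (mul_le_of_le_one_right (abs_nonneg _) hX1).trans (abs_hip_le_trNorm_of_proj φ Y hφ.2)
  · change νo.toFun (hip φ Y • X) ≤ νi.toFun Y
    rw [ho.smul]
    calc |hip φ Y| * νo.toFun X
        ≤ (dualNormF νi.toFun φ * νi.toFun Y) * (dualNormF νi.toFun φ)⁻¹ :=
          mul_le_mul (abs_hip_le_dualNormF hi φ Y) hXD (ho.nonneg X)
            (mul_nonneg hD.le (hi.nonneg Y))
      _ = νi.toFun Y := by field_simp
  · change trNorm (hip φ φ • X - ρ) ≤ ε
    rwa [hφ.hip_self, one_smul]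

end
end

section
/- (Support-dependence of the zero-error quantity) Let ρ be a state on H, ‖·‖_μ a resource norm on T_sa(H), and Π_ρ the orthogonal projection onto the range (support) of ρ. Then inf{d_ħ^0(ρ‖Z) : Z ∈ T_sa(H), ‖Z‖_μ ≤ 1} = max{1/‖Q‖_μ° : Q ∈ T_sa(H), 2Π_ρ − 1 ≤ Q ≤ 1}. In particular, this quantity depends on ρ only through its support. -/
/-!
For `ε = 0` the constraint `Tr (Q ρ) ≥ 1` together with `-1 ≤ Q ≤ 1` forces `(1 - Q) ρ = 0`, so
the feasible tests are exactly the operators of the interval `F = [2Π - 1, 1]`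
(`feasible_iff`). This set depends only on the support of `ρ`, which gives the last claim.

Hence the infimum over the unit ball `B` of `‖·‖_μ` is the inverse of `sup_{Z ∈ B} inf_{Q ∈ F} ⟨Q, Z⟩`,
whereas the maximum over `F` is the inverse of `inf_{Q ∈ F} sup_{Z ∈ B} ⟨Q, Z⟩`. Both `F` and `B` are
compact and convex, so Sion's minimax theorem provides a saddle point `(Q, Z)`
(`exists_saddle`), and both sides equal `1 / ⟨Q, Z⟩`. The saddle value is positive because
`ρ / ‖ρ‖_μ` lies in `B` and pairs to a positive number with every element of `F`
(`exists_hip_pos`).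
-/

open scoped ComplexOrder
open Filter

noncomputable section

variable {ι κ : Type} [Fintype ι] [DecidableEq ι] [Fintype κ] [DecidableEq κ]

/-! ### Positive semidefinite matrices and the feasible set -/

open scoped MatrixOrder in
/-- Writing `A = Dᴴ D` and `B = Cᴴ C` turns the trace of `A B` into the squared Hilbert–Schmidt
norm of `D Cᴴ`. -/
lemma trace_mul_posSemidef {A B : Matrix ι ι ℂ} (hA : A.PosSemidef) (hB : B.PosSemidef) :
    0 ≤ (A * B).trace ∧ ((A * B).trace = 0 → A * B = 0) := by
  obtain ⟨D, rfl⟩ := CStarAlgebra.nonneg_iff_eq_star_mul_self.mp hA.nonneg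
  obtain ⟨C, rfl⟩ := CStarAlgebra.nonneg_iff_eq_star_mul_self.mp hB.nonneg
  simp only [Matrix.star_eq_conjTranspose]
  have key : (D.conjTranspose * D * (C.conjTranspose * C)).trace =
      ((D * C.conjTranspose).conjTranspose * (D * C.conjTranspose)).trace := by
    rw [Matrix.conjTranspose_mul, Matrix.conjTranspose_conjTranspose, ← Matrix.mul_assoc,
      Matrix.trace_mul_comm]
    simp only [Matrix.mul_assoc]
  rw [key]
  refine ⟨(Matrix.posSemidef_conjTranspose_mul_self _).trace_nonneg, fun h => ?_⟩
  have h0 := Matrix.trace_conjTranspose_mul_self_eq_zero_iff.mp h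
  calc D.conjTranspose * D * (C.conjTranspose * C)
      = D.conjTranspose * (D * C.conjTranspose) * C := by simp only [Matrix.mul_assoc]
    _ = 0 := by rw [h0]; simp

/-- Two matrices with the same kernel annihilate the same matrices from the left. -/
lemma mul_eq_zero_of_ker {A B : Matrix ι ι ℂ}
    (h : ∀ v : ι → ℂ, A.mulVec v = 0 → B.mulVec v = 0) {M : Matrix ι ι ℂ} (hM : A * M = 0) :
    B * M = 0 := by
  refine Matrix.ext_of_mulVec_single fun i => ?_
  rw [← Matrix.mulVec_mulVec, Matrix.zero_mulVec]
  apply h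
  rw [Matrix.mulVec_mulVec, hM, Matrix.zero_mulVec]

lemma posSemidef_of_proj (P : HMat ι) (hP : P.1 * P.1 = P.1) : P.1.PosSemidef := by
  have h := Matrix.posSemidef_conjTranspose_mul_self P.1
  rwa [(herm P).eq, hP] at h

/-- The tests of zero error for `ρ` are exactly the `Q` with `2Π - 1 ≤ Q ≤ 1`: zero error forces
`(1 - Q) ρ = 0`, hence `Q Π = Π Q = Π`, and then `Q - (2Π - 1)` is the compression of `1 + Q`
to the kernel of `ρ`. -/
lemma feasible_iff {ρ P : HMat ι} (hρ : IsState ρ) (hP : P.1 * P.1 = P.1)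
    (hS : ∀ v : ι → ℂ, P.1.mulVec v = 0 ↔ ρ.1.mulVec v = 0) (Q : HMat ι) :
    (loew (-(1 : Matrix ι ι ℂ)) Q.1 ∧ loew Q.1 1 ∧ 1 - 0 ≤ hip Q ρ) ↔
      (loew ((2 : ℂ) • P.1 - 1) Q.1 ∧ loew Q.1 1) := by
  have hPp := posSemidef_of_proj P hP
  unfold loew hip
  constructor
  · rintro ⟨h1, h2, h3⟩
    refine ⟨?_, h2⟩
    obtain ⟨t0, t1⟩ := trace_mul_posSemidef h2 hρ.1
    have e : ((1 - Q.1) * ρ.1).trace = 1 - (Q.1 * ρ.1).trace := by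
      rw [sub_mul, one_mul, Matrix.trace_sub, hρ.2]
    have z : (1 - Q.1) * ρ.1 = 0 := by
      apply t1
      rw [Complex.le_def] at t0
      apply Complex.ext
      · have := t0.1
        rw [e] at this ⊢
        simp at this ⊢
        linarith
      · exact t0.2.symm
    have z' : ρ.1 * (1 - Q.1) = 0 := by
      have := congrArg Matrix.conjTranspose z
      rwa [Matrix.conjTranspose_mul, Matrix.conjTranspose_zero, h2.isHermitian.eq,
        (herm ρ).eq] at this
    have w : P.1 * (1 - Q.1) = 0 := mul_eq_zero_of_ker (fun v => (hS v).2) z'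
    have w' : (1 - Q.1) * P.1 = 0 := by
      have := congrArg Matrix.conjTranspose w
      rwa [Matrix.conjTranspose_mul, Matrix.conjTranspose_zero, h2.isHermitian.eq,
        (herm P).eq] at this
    have a : P.1 * Q.1 = P.1 := by
      rw [mul_sub, mul_one, sub_eq_zero] at w; exact w.symm
    have a' : Q.1 * P.1 = P.1 := by
      rw [sub_mul, one_mul, sub_eq_zero] at w'; exact w'.symm
    have c := h1.conjTranspose_mul_mul_same (1 - P.1)
    rw [Matrix.conjTranspose_sub, Matrix.conjTranspose_one, (herm P).eq] at c
    have : (1 - P.1) * (Q.1 - -1) * (1 - P.1) = Q.1 - ((2 : ℂ) • P.1 - 1) := by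
      simp only [sub_mul, mul_sub, one_mul, mul_one, mul_neg, neg_mul, a, a', hP, two_smul]
      abel
    rwa [this] at c
  · rintro ⟨h1, h2⟩
    refine ⟨?_, h2, ?_⟩
    · have : Q.1 - -1 = (Q.1 - ((2 : ℂ) • P.1 - 1)) + (P.1 + P.1) := by
        rw [two_smul]; abel
      rw [this]
      exact h1.add (hPp.add hPp)
    · have w : ρ.1 * (1 - P.1) = 0 :=
        mul_eq_zero_of_ker (fun v => (hS v).1) (by rw [mul_sub, mul_one, hP, sub_self])
      have a : ρ.1 * P.1 = ρ.1 := by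
        rw [mul_sub, mul_one, sub_eq_zero] at w; exact w.symm
      have t0 := (trace_mul_posSemidef h1 hρ.1).1
      have e : ((Q.1 - ((2 : ℂ) • P.1 - 1)) * ρ.1).trace = (Q.1 * ρ.1).trace - 1 := by
        rw [sub_mul, sub_mul, one_mul, Matrix.trace_sub, Matrix.trace_sub, Matrix.smul_mul,
          Matrix.trace_smul, Matrix.trace_mul_comm P.1, a, hρ.2]
        norm_num
      rw [e, Complex.le_def] at t0
      have := t0.1
      simp at this
      linarith

lemma dhSet_eq {ρ P : HMat ι} (hρ : IsState ρ) (hP : P.1 * P.1 = P.1)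
    (hS : ∀ v : ι → ℂ, P.1.mulVec v = 0 ↔ ρ.1.mulVec v = 0) (Z : HMat ι) :
    dhSet ρ Z 0 =
      (fun Q => hip Q Z) '' {Q : HMat ι | loew ((2 : ℂ) • P.1 - 1) Q.1 ∧ loew Q.1 1} := by
  ext r
  constructor
  · rintro ⟨Q, h1, h2, h3, rfl⟩
    exact ⟨Q, (feasible_iff hρ hP hS Q).1 ⟨h1, h2, h3⟩, rfl⟩
  · rintro ⟨Q, hQ, rfl⟩
    obtain ⟨h1, h2, h3⟩ := (feasible_iff hρ hP hS Q).2 hQ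
    exact ⟨Q, h1, h2, h3, rfl⟩

/-- An operator with `-1 ≤ Q ≤ 1` has entries of modulus at most `card ι + 1`, because
`Tr Q² ≤ Tr 1`. -/
lemma norm_entry_le (Q : HMat ι) (h1 : loew (-(1 : Matrix ι ι ℂ)) Q.1) (h2 : loew Q.1 1)
    (i j : ι) : ‖Q.1 i j‖ ≤ Fintype.card ι + 1 := by
  have t := (trace_mul_posSemidef h2 h1).1
  have e : (1 - Q.1) * (Q.1 - -1) = 1 - Q.1.conjTranspose * Q.1 := by
    rw [(herm Q).eq]; noncomm_ring
  have s : (Q.1.conjTranspose * Q.1).trace = ((∑ j, ∑ i, ‖Q.1 i j‖ ^ 2 : ℝ) : ℂ) := by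
    simp [Matrix.trace, Matrix.mul_apply, Complex.conj_mul']
  rw [e, Matrix.trace_sub, s, Matrix.trace_one, Complex.le_def] at t
  have t' : (0 : ℝ) ≤ Fintype.card ι - ∑ j, ∑ i, ‖Q.1 i j‖ ^ 2 := by
    have := t.1
    simpa only [Complex.zero_re, Complex.sub_re, Complex.natCast_re, Complex.ofReal_re] using this
  have u : ‖Q.1 i j‖ ^ 2 ≤ ∑ j, ∑ i, ‖Q.1 i j‖ ^ 2 :=
    (Finset.single_le_sum (f := fun i => ‖Q.1 i j‖ ^ 2) (fun _ _ => by positivity)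
      (Finset.mem_univ i)).trans
    (Finset.single_le_sum (f := fun j => ∑ i, ‖Q.1 i j‖ ^ 2) (fun _ _ => by positivity)
      (Finset.mem_univ j))
  nlinarith [norm_nonneg (Q.1 i j)]

/-! ### Compactness and convexity -/

instance : FiniteDimensional ℝ (HMat ι) :=
  FiniteDimensional.of_injective
    ({ toFun := Subtype.val, map_add' := fun _ _ => rfl, map_smul' := fun _ _ => rfl } :
      HMat ι →ₗ[ℝ] Matrix ι ι ℂ) Subtype.val_injective

instance : ContinuousSMul ℝ (HMat ι) :=
  ⟨Continuous.subtype_mk (f := fun p : ℝ × HMat ι => p.1 • p.2.1) (by fun_prop) _⟩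

/-- The image of a closed ball under a linear map out of a finite-dimensional normed space is compact,
whatever vector space topology the target carries. -/
lemma isCompact_image_closedBall {V W : Type*} [NormedAddCommGroup V] [NormedSpace ℝ V]
    [FiniteDimensional ℝ V] [AddCommGroup W] [Module ℝ W] [TopologicalSpace W]
    [IsTopologicalAddGroup W] [ContinuousSMul ℝ W] (f : V →ₗ[ℝ] W) (r : ℝ) :
    IsCompact (f '' Metric.closedBall 0 r) := by
  have : ProperSpace V := FiniteDimensional.proper ℝ V
  exact (isCompact_closedBall 0 r).image f.continuous_of_finiteDimensional

/-- The sublevel sets of a norm on `HMat ι` are compact: `HMat ι` is finite dimensional, so the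
identity is continuous from the topology of the norm to the topology of matrix entries. -/
lemma isCompact_sublevel (ν : MatNorm ι) (r : ℝ) : IsCompact {X : HMat ι | ν.toFun X ≤ r} := by
  have h0 : ν.toFun 0 = 0 := by simpa using ν.smul' 0 0
  have hneg (X : HMat ι) : ν.toFun (-X) = ν.toFun X := by simpa using ν.smul' (-1) X
  have hnn (X : HMat ι) : 0 ≤ ν.toFun X := by
    have := ν.add_le' X (-X)
    rw [add_neg_cancel, h0, hneg] at this
    linarith
  let : Norm (HMat ι) := ⟨ν.toFun⟩
  have core : NormedSpace.Core ℝ (HMat ι) :=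
    { norm_nonneg := hnn
      norm_smul := fun c x => by simpa using! ν.smul' c x
      norm_triangle := ν.add_le'
      norm_eq_zero_iff := fun x => ⟨ν.eq_zero' x, fun h => by subst h; exact h0⟩ }
  let iN : NormedAddCommGroup (HMat ι) := NormedAddCommGroup.ofCore core
  let iS : NormedSpace ℝ (HMat ι) := NormedSpace.ofCore core
  -- `W` carries the topology of matrix entries, `V` the one induced by the norm.
  have hc := @isCompact_image_closedBall (HMat ι) (HMat ι) iN iS inferInstance inferInstance
    inferInstance instTopologicalSpaceSubtype inferInstance inferInstance LinearMap.id r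
  convert hc using 1
  ext X
  constructor
  · intro hX
    exact ⟨X, mem_closedBall_zero_iff.mpr hX, rfl⟩
  · rintro ⟨Y, hY, rfl⟩
    exact mem_closedBall_zero_iff.mp hY

lemma convex_sublevel (ν : MatNorm ι) (r : ℝ) : Convex ℝ {X : HMat ι | ν.toFun X ≤ r} := by
  intro X hX Y hY a b ha hb hab
  have h1 := ν.add_le' (a • X) (b • Y)
  rw [ν.smul', ν.smul', abs_of_nonneg ha, abs_of_nonneg hb] at h1
  simp only [Set.mem_ofPred_eq] at hX hY ⊢
  calc _ ≤ _ := h1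
    _ ≤ a * r + b * r := by gcongr
    _ = r := by rw [← add_mul, hab, one_mul]

attribute [local instance] Matrix.normedAddCommGroup Matrix.normedSpace in
/-- A closed set of self-adjoint operators with uniformly bounded entries is compact. -/
lemma isCompact_of_entries {F : Set (HMat ι)} (hF : IsClosed F) {C : ℝ} (hC : 0 ≤ C)
    (hb : ∀ Q ∈ F, ∀ i j, ‖Q.1 i j‖ ≤ C) : IsCompact F := by
  let N : MatNorm ι :=
    { toFun := fun X => ‖X.1‖
      eq_zero' := fun X h => Subtype.ext (norm_eq_zero.mp h)
      smul' := fun t X => by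
        change ‖t • X.1‖ = _
        rw [norm_smul, Real.norm_eq_abs]
      add_le' := fun X Y => norm_add_le X.1 Y.1 }
  exact (isCompact_sublevel N C).of_isClosed_subset hF fun Q hQ =>
    (Matrix.norm_le_iff hC).mpr (hb Q hQ)

lemma isClosed_posSemidef : IsClosed {M : Matrix ι ι ℂ | M.PosSemidef} := by
  have : {M : Matrix ι ι ℂ | M.PosSemidef} =
      {M | M.conjTranspose = M} ∩ ⋂ x : ι → ℂ, {M | 0 ≤ star x ⬝ᵥ (M.mulVec x)} := by
    ext M
    simp [Matrix.posSemidef_iff_dotProduct_mulVec, Matrix.IsHermitian]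
  rw [this]
  refine (isClosed_eq (by fun_prop) continuous_id).inter (isClosed_iInter fun x => ?_)
  exact isClosed_le continuous_const (by fun_prop)

lemma isClosed_interval (A B : Matrix ι ι ℂ) :
    IsClosed {Q : HMat ι | loew A Q.1 ∧ loew Q.1 B} := by
  refine IsClosed.inter ?_ ?_
  · exact isClosed_posSemidef.preimage (f := fun Q : HMat ι => Q.1 - A) (by fun_prop)
  · exact isClosed_posSemidef.preimage (f := fun Q : HMat ι => B - Q.1) (by fun_prop)

lemma convex_interval (A B : Matrix ι ι ℂ) :
    Convex ℝ {Q : HMat ι | loew A Q.1 ∧ loew Q.1 B} := by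
  rintro X ⟨hX1, hX2⟩ Y ⟨hY1, hY2⟩ a b ha hb hab
  unfold loew at *
  have hsum (M : Matrix ι ι ℂ) : M = a • M + b • M := by rw [← add_smul, hab, one_smul]
  have e : (a • X + b • Y : HMat ι).1 = a • X.1 + b • Y.1 := rfl
  constructor
  · change ((a • X + b • Y : HMat ι).1 - A).PosSemidef
    have : (a • X + b • Y : HMat ι).1 - A = a • (X.1 - A) + b • (Y.1 - A) := by
      rw [e]; nth_rewrite 1 [hsum A]; rw [smul_sub, smul_sub]; abel
    rw [this]
    exact (hX1.smul ha).add (hY1.smul hb)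
  · change (B - (a • X + b • Y : HMat ι).1).PosSemidef
    have : B - (a • X + b • Y : HMat ι).1 = a • (B - X.1) + b • (B - Y.1) := by
      rw [e]; nth_rewrite 1 [hsum B]; rw [smul_sub, smul_sub]; abel
    rw [this]
    exact (hX2.smul ha).add (hY2.smul hb)

/-! ### The minimax argument -/

/-- The Hilbert–Schmidt inner product as a bilinear form. -/
def hipBilin : HMat ι →ₗ[ℝ] HMat ι →ₗ[ℝ] ℝ :=
  LinearMap.mk₂ ℝ hip
    (fun X Y Z => by simp [hip, add_mul]) (fun c X Y => by simp [hip])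
    (fun X Y Z => by simp [hip, mul_add]) (fun c X Y => by simp [hip])

lemma continuous_hip_left (Z : HMat ι) : Continuous fun Q => hip Q Z :=
  (hipBilin.flip Z).continuous_of_finiteDimensional

lemma continuous_hip_right (Q : HMat ι) : Continuous (hip Q) :=
  (hipBilin Q).continuous_of_finiteDimensional

/-- The Hilbert–Schmidt pairing has a saddle point on the product of the operator interval
`[2Π - 1, 1]` and the unit ball of a norm (Sion's theorem). -/
lemma exists_saddle (ν : MatNorm ι) {P : HMat ι} (hP : P.1 * P.1 = P.1) :
    ∃ Q : HMat ι, (loew ((2 : ℂ) • P.1 - 1) Q.1 ∧ loew Q.1 1) ∧ ∃ Z : HMat ι, ν.toFun Z ≤ 1 ∧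
      ∀ Q' : HMat ι, (loew ((2 : ℂ) • P.1 - 1) Q'.1 ∧ loew Q'.1 1) →
        ∀ Z' : HMat ι, ν.toFun Z' ≤ 1 → hip Q Z' ≤ hip Q' Z := by
  have hPp := posSemidef_of_proj P hP
  have hcpt : IsCompact {Q : HMat ι | loew ((2 : ℂ) • P.1 - 1) Q.1 ∧ loew Q.1 1} := by
    refine isCompact_of_entries (isClosed_interval _ _)
      (C := Fintype.card ι + 1) (by positivity) ?_
    rintro Q ⟨h1, h2⟩
    refine norm_entry_le Q ?_ h2
    have : Q.1 - -1 = (Q.1 - ((2 : ℂ) • P.1 - 1)) + (P.1 + P.1) := by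
      rw [two_smul]; abel
    unfold loew at *
    rw [this]
    exact h1.add (hPp.add hPp)
  -- The identity belongs to the interval because `1 - Π = (1 - Π)ᴴ (1 - Π)`.
  have hne : {Q : HMat ι | loew ((2 : ℂ) • P.1 - 1) Q.1 ∧ loew Q.1 1}.Nonempty := by
    refine ⟨1, ?_, ?_⟩
    · have h := Matrix.posSemidef_conjTranspose_mul_self (1 - P.1)
      rw [Matrix.conjTranspose_sub, Matrix.conjTranspose_one, (herm P).eq] at h
      have e : (1 : Matrix ι ι ℂ) - ((2 : ℂ) • P.1 - 1) =
          (1 - P.1) * (1 - P.1) + (1 - P.1) * (1 - P.1) := by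
        simp only [sub_mul, mul_sub, one_mul, mul_one, hP, two_smul]
        abel
      change ((1 : Matrix ι ι ℂ) - ((2 : ℂ) • P.1 - 1)).PosSemidef
      rw [e]
      exact h.add h
    · change ((1 : Matrix ι ι ℂ) - 1).PosSemidef
      rw [sub_self]
      exact Matrix.PosSemidef.zero
  have hne' : {X : HMat ι | ν.toFun X ≤ 1}.Nonempty := by
    refine ⟨0, ?_⟩
    have h0 : ν.toFun 0 = 0 := by simpa using ν.smul' 0 0
    simp [h0]
  obtain ⟨Q, hQ, Z, hZ, h⟩ := Sion.exists_isSaddlePointOn (f := hip) hne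
    (convex_interval _ _) hcpt
    (fun Z _ => (continuous_hip_left Z).continuousOn.lowerSemicontinuousOn)
    (fun Z _ => ((hipBilin.flip Z).convexOn (convex_interval _ _)).quasiconvexOn)
    (convex_sublevel ν 1) hne' (isCompact_sublevel ν 1)
    (fun Q _ => (continuous_hip_right Q).continuousOn.upperSemicontinuousOn)
    (fun Q _ => ((hipBilin Q).concaveOn (convex_sublevel ν 1)).quasiconcaveOn)
  exact ⟨Q, hQ, Z, hZ, fun Q' hQ' Z' hZ' => h Q' hQ' Z' hZ'⟩

/-- A test of zero error has a strictly positive pairing with the normalised state `ρ / ‖ρ‖`. -/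
lemma exists_hip_pos (ν : ResourceNorm ι) {ρ : HMat ι} (hρ : IsState ρ) {Q : HMat ι}
    (hQ : 1 - 0 ≤ hip Q ρ) : ∃ Z, ν.toFun Z ≤ 1 ∧ 0 < hip Q Z := by
  have h1 := ν.one_le_state' ρ hρ
  have hpos : 0 < ν.toFun ρ := by linarith
  refine ⟨(ν.toFun ρ)⁻¹ • ρ, ?_, ?_⟩
  · rw [ν.smul', abs_of_pos (by positivity), inv_mul_cancel₀ hpos.ne']
  · have : hip Q ((ν.toFun ρ)⁻¹ • ρ) = (ν.toFun ρ)⁻¹ * hip Q ρ :=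
      (hipBilin Q).map_smul _ _
    rw [this]
    have : 0 < hip Q ρ := by linarith
    positivity

lemma bddAbove_dual (ν : MatNorm ι) (Q : HMat ι) :
    BddAbove {r | ∃ X, ν.toFun X ≤ 1 ∧ r = hip Q X} := by
  refine ((isCompact_sublevel ν 1).bddAbove_image (continuous_hip_right Q).continuousOn).mono ?_
  rintro r ⟨X, hX, rfl⟩
  exact ⟨X, hX, rfl⟩

/-- **Support-dependence of the zero-error quantity.**
If `Π` is the orthogonal projection onto the support of `ρ`, then
`inf {d_ħ^0(ρ‖Z) : ‖Z‖_μ ≤ 1} = max {1/‖Q‖_μ° : 2Π − 1 ≤ Q ≤ 1}` (maximum attained),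
and in particular this quantity depends on `ρ` only through its support. -/
theorem zero_error_support_dependence
    {d : Type} [Fintype d] [DecidableEq d]
    (ν : ResourceNorm d) (ρ : HMat d) (hρ : IsState ρ)
    (P : HMat d) (hProj : P.1 * P.1 = P.1)
    (hSupp : ∀ v : d → ℂ, P.1.mulVec v = 0 ↔ ρ.1.mulVec v = 0) :
    (∃ Q : HMat d, loew ((2 : ℂ) • P.1 - 1) Q.1 ∧ loew Q.1 1 ∧
      (⨅ Z ∈ {Z : HMat d | ν.toFun Z ≤ 1}, dEmanc ρ Z 0) =
        (((dualNormF ν.toFun Q)⁻¹ : ℝ) : EReal) ∧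
      ∀ Q' : HMat d, loew ((2 : ℂ) • P.1 - 1) Q'.1 → loew Q'.1 1 →
        (((dualNormF ν.toFun Q')⁻¹ : ℝ) : EReal) ≤
          ⨅ Z ∈ {Z : HMat d | ν.toFun Z ≤ 1}, dEmanc ρ Z 0) ∧
    (∀ ρ' : HMat d, IsState ρ' → (∀ v : d → ℂ, ρ'.1.mulVec v = 0 ↔ ρ.1.mulVec v = 0) →
      (⨅ Z ∈ {Z : HMat d | ν.toFun Z ≤ 1}, dEmanc ρ' Z 0) =
        ⨅ Z ∈ {Z : HMat d | ν.toFun Z ≤ 1}, dEmanc ρ Z 0) := by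
  refine ⟨?_, fun ρ' hρ' hS' => ?_⟩
  · obtain ⟨Q, hQ, Z, hZ, hsad⟩ := exists_saddle ν.toMatNorm hProj
    have hfeas := (feasible_iff hρ hProj hSupp Q).2 hQ
    obtain ⟨Z₀, hZ₀, hpos⟩ := exists_hip_pos ν hρ hfeas.2.2
    have hv : 0 < hip Q Z := hpos.trans_le (hsad Q hQ Z₀ hZ₀)
    have hdual : dualNormF ν.toFun Q = hip Q Z := by
      refine IsGreatest.csSup_eq ⟨⟨Z, hZ, rfl⟩, ?_⟩
      rintro r ⟨X, hX, rfl⟩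
      exact hsad Q hQ X hX
    have hinf : sInf (dhSet ρ Z 0) = hip Q Z := by
      rw [dhSet_eq hρ hProj hSupp]
      refine IsLeast.csInf_eq ⟨⟨Q, hQ, rfl⟩, ?_⟩
      rintro r ⟨Q', hQ', rfl⟩
      exact hsad Q' hQ' Z hZ
    have hval : (⨅ Z ∈ {Z : HMat d | ν.toFun Z ≤ 1}, dEmanc ρ Z 0) =
        (((hip Q Z)⁻¹ : ℝ) : EReal) := by
      apply le_antisymm
      · refine (iInf₂_le Z hZ).trans ?_
        rw [dEmanc, hinf, if_pos hv]
      · refine le_iInf₂ fun Z' hZ' => ?_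
        unfold dEmanc
        split_ifs with hp
        · rw [EReal.coe_le_coe_iff]
          refine inv_anti₀ hp ?_
          -- An unbounded set has junk infimum `0`, which positivity of the infimum excludes.
          have hb : BddBelow (dhSet ρ Z' 0) := by
            by_contra hb
            rw [Real.sInf_of_not_bddBelow hb] at hp
            exact lt_irrefl _ hp
          exact (csInf_le hb ⟨Q, hfeas.1, hfeas.2.1, hfeas.2.2, rfl⟩).trans (hsad Q hQ Z' hZ')
        · exact le_top
    refine ⟨Q, hQ.1, hQ.2, by rw [hval, hdual], fun Q' h1 h2 => ?_⟩
    rw [hval, EReal.coe_le_coe_iff]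
    exact inv_anti₀ hv ((hsad Q' ⟨h1, h2⟩ Z hZ).trans
      (le_csSup (bddAbove_dual ν.toMatNorm Q') ⟨Z, hZ, rfl⟩))
  · have : ∀ Z, dEmanc ρ' Z 0 = dEmanc ρ Z 0 := fun Z => by
      rw [dEmanc, dEmanc, dhSet_eq hρ hProj hSupp,
        dhSet_eq hρ' hProj fun v => (hSupp v).trans (hS' v).symm]
    simp only [this]
end
end
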